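/- Let C ⇄ E ⇄ D be a split short exact sequence of stable ∞-categories, and suppose C and D carry weight structures such that π₀Map_E(i_D X, i_C Y) = 0 for all X ∈ D_{w≤0} and Y ∈ Σ C_{w≥0}. Then there exists a unique weight structure on E making all four functors weight-exact; its non-negative (resp. non-positive) part is the extension-closure of i_C(C_{w≥0}) ∪ i_D(D_{w≥0}) (resp. i_C(C_{w≤0}) ∪ i_D(D_{w≤0})). -/

import Mathlib

open CategoryTheory Limits Pretriangulated

universe v u

variable (C : Type u) [Category.{v} C] [HasZeroObject C] [Preadditive C]
  [HasShift C ℤ] [∀ n : ℤ, (shiftFunctor C n).Additive] [Pretriangulated C]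

/-- A weight structure on a stable (pretriangulated) category `C`: a pair of
Karoubi-closed full subcategories `le = C_{w≤0}` and `ge = C_{w≥0}` which are
semi-invariant under the translations, satisfy the orthogonality condition
`π₀Map(X, ΣY) = 0` for `X ∈ C_{w≤0}`, `Y ∈ C_{w≥0}`, and such that every object
admits a weight decomposition `w≤0 X → X → w≥1 X`. -/
structure WeightStructure where
  /-- the subcategory `C_{w≤0}` -/
  le : Set C
  /-- the subcategory `C_{w≥0}` -/
  ge : Set C
  le_iso : ∀ ⦃X Y : C⦄, (X ≅ Y) → le X → le Y
  ge_iso : ∀ ⦃X Y : C⦄, (X ≅ Y) → ge X → ge Y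
  le_retract : ∀ ⦃X Y : C⦄, le Y → (∃ (i : X ⟶ Y) (r : Y ⟶ X), i ≫ r = 𝟙 X) → le X
  ge_retract : ∀ ⦃X Y : C⦄, ge Y → (∃ (i : X ⟶ Y) (r : Y ⟶ X), i ≫ r = 𝟙 X) → ge X
  /-- `Ω C_{w≤0} ⊆ C_{w≤0}` -/
  le_shift : ∀ ⦃X : C⦄, le X → le (X⟦(-1 : ℤ)⟧)
  /-- `Σ C_{w≥0} ⊆ C_{w≥0}` -/
  ge_shift : ∀ ⦃X : C⦄, ge X → ge (X⟦(1 : ℤ)⟧)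
  /-- orthogonality: `π₀Map(X, ΣY) = 0` for `X ∈ C_{w≤0}`, `Y ∈ C_{w≥0}` -/
  orth : ∀ ⦃X Y : C⦄, le X → ge Y → ∀ f : X ⟶ Y⟦(1 : ℤ)⟧, f = 0
  /-- weight decompositions -/
  decomp : ∀ X : C, ∃ (A B : C) (f : A ⟶ X) (g : X ⟶ B) (h : B ⟶ A⟦(1 : ℤ)⟧),
    (Triangle.mk f g h ∈ distTriang C) ∧ le A ∧ ∃ B₀, ge B₀ ∧ Nonempty (B ≅ B₀⟦(1 : ℤ)⟧)

variable {C}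

/-- The heart `Hw = C_{w≥0} ∩ C_{w≤0}` of a weight structure. -/
def WeightStructure.heart (w : WeightStructure C) : Set C := w.le ∩ w.ge

/-- A weight structure is bounded if every object lies in `Σⁿ C_{w≤0}` and in
`Ωⁿ C_{w≥0}` for some `n`. -/
def WeightStructure.IsBounded (w : WeightStructure C) : Prop :=
  ∀ X : C, ∃ n : ℤ, w.le (X⟦(-n)⟧) ∧ w.ge (X⟦n⟧)

variable (C) in
/-- A t-structure on a stable (pretriangulated) category `C`, in homological
(connective) indexing: `ge = C_{t≥0}` is closed under suspension, `le = C_{t≤0}`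
under loops, maps from `C_{t≥1}` to `C_{t≤0}` vanish on `π₀Map`, and every object
admits a truncation triangle `τ≥0 X → X → τ≤-1 X`. -/
structure TStructure where
  /-- the subcategory `C_{t≤0}` -/
  le : Set C
  /-- the subcategory `C_{t≥0}` -/
  ge : Set C
  le_iso : ∀ ⦃X Y : C⦄, (X ≅ Y) → le X → le Y
  ge_iso : ∀ ⦃X Y : C⦄, (X ≅ Y) → ge X → ge Y
  /-- `Ω C_{t≤0} ⊆ C_{t≤0}` -/
  le_shift : ∀ ⦃X : C⦄, le X → le (X⟦(-1 : ℤ)⟧)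
  /-- `Σ C_{t≥0} ⊆ C_{t≥0}` -/
  ge_shift : ∀ ⦃X : C⦄, ge X → ge (X⟦(1 : ℤ)⟧)
  /-- orthogonality: `π₀Map(ΣY, X) = 0` for `Y ∈ C_{t≥0}`, `X ∈ C_{t≤0}` -/
  orth : ∀ ⦃X Y : C⦄, le X → ge Y → ∀ f : Y⟦(1 : ℤ)⟧ ⟶ X, f = 0
  /-- truncation triangles -/
  trunc : ∀ X : C, ∃ (A B : C) (f : A ⟶ X) (g : X ⟶ B) (h : B ⟶ A⟦(1 : ℤ)⟧),
    (Triangle.mk f g h ∈ distTriang C) ∧ ge A ∧ ∃ B₀, le B₀ ∧ Nonempty (B ≅ B₀⟦(-1 : ℤ)⟧)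

/-- The heart `Ht = C_{t≥0} ∩ C_{t≤0}` of a t-structure. -/
def TStructure.heart (t : TStructure C) : Set C := t.le ∩ t.ge

variable (C) in
/-- A functor between stable categories with weight structures is weight-exact if it
preserves both the non-positive and the non-negative classes. -/
def WeightExact {D : Type*} [Category D] (F : C ⥤ D)
    (wC : WeightStructure C)
    (wD : Set D × Set D) : Prop :=
  (∀ X : C, wC.le X → F.obj X ∈ wD.1) ∧ (∀ X : C, wC.ge X → F.obj X ∈ wD.2)

variable (C) in
/-- The extension-closure of a class of objects `S` in a stable category: the smallest
class containing `S` which is closed under isomorphisms and extensions (distinguished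
triangles). -/
inductive ExtClosure (S : Set C) : C → Prop
  | of {X : C} : X ∈ S → ExtClosure S X
  | iso {X Y : C} : (X ≅ Y) → ExtClosure S X → ExtClosure S Y
  | ext {A X B : C} (f : A ⟶ X) (g : X ⟶ B) (h : B ⟶ A⟦(1 : ℤ)⟧) :
      (Triangle.mk f g h ∈ distTriang C) → ExtClosure S A → ExtClosure S B →
      ExtClosure S X

section

universe v₁ u₁ v₂ u₂

variable (D : Type u₁) [Category.{v₁} D] [HasZeroObject D] [Preadditive D]
  [HasShift D ℤ] [∀ n : ℤ, (shiftFunctor D n).Additive] [Pretriangulated D]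
  (E : Type u₂) [Category.{v₂} E] [HasZeroObject E] [Preadditive E]
  [HasShift E ℤ] [∀ n : ℤ, (shiftFunctor E n).Additive] [Pretriangulated E]

/-!
Every `X` sits in a triangle `iC (LC X) ⟶ X ⟶ iD (LD X)`, so the classes on `E` can be tested after
applying `LC` and `LD`. Maps from a non-positive object to a positive one are then built from maps
in `C`, maps in `D`, maps from `iC` to `iD`, which always vanish, and maps from `iD` to `iC`, which
vanish by assumption.

To decompose `X`, let `Z` be the cone of `iC P ⟶ X`, where `P` is the non-positive part of `LC X`,
and `B` the cone of `iD Q ⟶ Z`, where `Q` is the non-positive part of `LD Z`. Here `Q ⟶ LD Z` gives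
a map to `Z` because the obstruction lies in `Hom (iD Q, Σ iC (LC Z))`, which vanishes as `LC Z` is
positive. The fibre of `X ⟶ B` is the non-positive part. When `iD` has a right adjoint `RD`, the
same construction with `RD Z` in place of `LD Z` truncates `X` for a glued t-structure, as for a
recollement.

The classes of a weight structure are each other's orthogonals. They are therefore closed under
extensions, and two comparable weight structures coincide; this gives uniqueness.
-/

section ExactPair

variable {D}

/-- The pair `f`, `g` consists of the first two morphisms of a distinguished triangle. The gluing
argument never refers to a particular connecting morphism, so it is existentially quantified. -/
def ExactPair {X Y Z : C} (f : X ⟶ Y) (g : Y ⟶ Z) : Prop :=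
  ∃ h : Z ⟶ X⟦(1 : ℤ)⟧, Triangle.mk f g h ∈ distTriang C

namespace ExactPair

lemma exists_cone {X Y : C} (f : X ⟶ Y) : ∃ (Z : C) (g : Y ⟶ Z), ExactPair f g := by
  obtain ⟨Z, g, h, H⟩ := distinguished_cocone_triangle f
  exact ⟨Z, g, h, H⟩

lemma exists_fiber {Y Z : C} (g : Y ⟶ Z) : ∃ (X : C) (f : X ⟶ Y), ExactPair f g := by
  obtain ⟨X, f, h, H⟩ := distinguished_cocone_triangle₁ g
  exact ⟨X, f, h, H⟩

section

variable {X Y Z : C} {f : X ⟶ Y} {g : Y ⟶ Z} (H : ExactPair f g)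
  {X' Y' Z' : C} {f' : X' ⟶ Y'} {g' : Y' ⟶ Z'}

include H

lemma map (F : C ⥤ D) [F.CommShift ℤ] [F.IsTriangulated] : ExactPair (F.map f) (F.map g) := by
  obtain ⟨h, H⟩ := H
  exact ⟨_, F.map_distinguished _ H⟩

lemma of_iso (e₁ : X ≅ X') (e₂ : Y ≅ Y') (e₃ : Z ≅ Z')
    (h₁ : f ≫ e₂.hom = e₁.hom ≫ f') (h₂ : g ≫ e₃.hom = e₂.hom ≫ g') : ExactPair f' g' := by
  obtain ⟨h, H⟩ := H
  refine ⟨e₃.inv ≫ h ≫ e₁.hom⟦1⟧', isomorphic_distinguished _ H _ (Iso.symm ?_)⟩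
  exact Triangle.isoMk _ _ e₁ e₂ e₃ h₁ h₂ (e₃.hom_inv_id_assoc _).symm

lemma shift : ExactPair (f⟦(1 : ℤ)⟧') (g⟦(1 : ℤ)⟧') := by
  obtain ⟨h, H⟩ := H
  -- Shifting a triangle changes the sign of its morphisms; `-1` on the middle object undoes this.
  have hneg : ExactPair ((1 : ℤ).negOnePow • f⟦(1 : ℤ)⟧') ((1 : ℤ).negOnePow • g⟦(1 : ℤ)⟧') :=
    ⟨_, Triangle.shift_distinguished _ H 1⟩
  exact hneg.of_iso (Iso.refl _) ((-1 : ℤˣ) • Iso.refl _) (Iso.refl _) (by simp) (by simp)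

lemma nonempty_cone_iso (H' : ExactPair f' g') (e₁ : X ≅ X') (e₂ : Y ≅ Y')
    (comm : f ≫ e₂.hom = e₁.hom ≫ f') : Nonempty (Z ≅ Z') := by
  obtain ⟨h, H⟩ := H
  obtain ⟨h', H'⟩ := H'
  exact ⟨Triangle.π₃.mapIso (isoTriangleOfIso₁₂ _ _ H H' e₁ e₂ comm)⟩

lemma nonempty_fiber_iso (H' : ExactPair f' g') (e₂ : Y ≅ Y') (e₃ : Z ≅ Z')
    (comm : g ≫ e₃.hom = e₂.hom ≫ g') : Nonempty (X ≅ X') := by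
  obtain ⟨h, H⟩ := H
  obtain ⟨h', H'⟩ := H'
  let e := isoTriangleOfIso₁₂ _ _ (rot_of_distTriang _ H) (rot_of_distTriang _ H') e₂ e₃ comm
  exact ⟨(shiftFunctor C (1 : ℤ)).preimageIso (Triangle.π₃.mapIso e)⟩

lemma isIso_of_isZero (hX : IsZero X) : IsIso g := by
  obtain ⟨h, H⟩ := H
  exact (Triangle.isZero₁_iff_isIso₂ _ H).1 hX

lemma isIso_map (F : C ⥤ D) [F.CommShift ℤ] [F.IsTriangulated] (hX : IsZero (F.obj X)) :
    IsIso (F.map g) :=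
  (H.map F).isIso_of_isZero hX

lemma isZero_of_isIso [IsIso f] : IsZero Z := by
  obtain ⟨h, H⟩ := H
  exact (Triangle.isZero₃_iff_isIso₁ _ H).2 (inferInstanceAs (IsIso f))

lemma exists_factor_right {W : C} (k : Y ⟶ W) (hk : f ≫ k = 0) : ∃ l : Z ⟶ W, k = g ≫ l := by
  obtain ⟨h, H⟩ := H
  exact Triangle.yoneda_exact₂ _ H k hk

lemma exists_factor_left {W : C} (k : W ⟶ Y) (hk : k ≫ g = 0) : ∃ l : W ⟶ X, k = l ≫ f := by
  obtain ⟨h, H⟩ := H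
  exact Triangle.coyoneda_exact₂ _ H k hk

lemma exists_lift {W : C} (hW : ∀ k : W ⟶ X⟦(1 : ℤ)⟧, k = 0) (k : W ⟶ Z) :
    ∃ l : W ⟶ Y, k = l ≫ g := by
  obtain ⟨h, H⟩ := H
  exact Triangle.coyoneda_exact₃ _ H k (hW _)

lemma eq_zero_of_source {W : C} (hX : ∀ k : X ⟶ W, k = 0) (hZ : ∀ k : Z ⟶ W, k = 0)
    (k : Y ⟶ W) : k = 0 := by
  obtain ⟨l, rfl⟩ := H.exists_factor_right k (hX _)
  rw [hZ l, comp_zero]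

lemma eq_zero_of_target {W : C} (hX : ∀ k : W ⟶ X, k = 0) (hZ : ∀ k : W ⟶ Z, k = 0)
    (k : W ⟶ Y) : k = 0 := by
  obtain ⟨l, rfl⟩ := H.exists_factor_left k (hZ _)
  rw [hX l, zero_comp]

end

lemma nonempty_rightAdjoint_cone_iso {G : C ⥤ D} {R : D ⥤ C} (adj : G ⊣ R) [G.Full] [G.Faithful]
    [R.CommShift ℤ] [R.IsTriangulated] {P P' : C} {X Z : D} {a : P ⟶ R.obj X} {b : R.obj X ⟶ P'}
    {q : X ⟶ Z} (Hq : ExactPair (G.map a ≫ adj.counit.app X) q) (Hab : ExactPair a b) :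
    Nonempty (R.obj Z ≅ P') :=
  (Hq.map R).nonempty_cone_iso Hab (asIso (adj.unit.app P)).symm (Iso.refl _)
    (by simp [IsIso.eq_inv_comp])

end ExactPair

end ExactPair

namespace WeightStructure

variable (w : WeightStructure C)

/-- The class `C_{w≥1} = Σ C_{w≥0}`, encoded by desuspending. -/
def pos : Set C := {X | w.ge (X⟦(-1 : ℤ)⟧)}

variable {w}

lemma pos_iso {X Y : C} (e : X ≅ Y) (hX : w.pos X) : w.pos Y :=
  w.ge_iso ((shiftFunctor C (-1 : ℤ)).mapIso e) hX

lemma pos_shift_iff {X : C} : w.pos (X⟦(1 : ℤ)⟧) ↔ w.ge X :=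
  ⟨w.ge_iso (shiftShiftNeg X (1 : ℤ)), w.ge_iso (shiftShiftNeg X (1 : ℤ)).symm⟩

lemma ge_of_pos {X : C} (hX : w.pos X) : w.ge X :=
  w.ge_iso (shiftNegShift X (1 : ℤ)) (w.ge_shift hX)

lemma eq_zero_of_le_of_pos {X Y : C} (hX : w.le X) (hY : w.pos Y) (f : X ⟶ Y) : f = 0 := by
  rw [← cancel_mono (shiftNegShift Y (1 : ℤ)).inv, zero_comp]
  exact w.orth hX hY _

lemma eq_zero_of_pos_of_forall_ge {ℬ : Type*} [Category* ℬ] [HasZeroMorphisms ℬ] [HasShift ℬ ℤ]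
    {F : C ⥤ ℬ} [F.CommShift ℤ] {X : ℬ}
    (hX : ∀ Y, w.ge Y → ∀ f : X ⟶ (F.obj Y)⟦(1 : ℤ)⟧, f = 0)
    {Y : C} (hY : w.pos Y) (f : X ⟶ F.obj Y) : f = 0 := by
  let e : F.obj Y ≅ (F.obj (Y⟦(-1 : ℤ)⟧))⟦(1 : ℤ)⟧ :=
    F.mapIso (shiftNegShift Y (1 : ℤ)).symm ≪≫ (F.commShiftIso (1 : ℤ)).app _
  rw [← cancel_mono e.hom, zero_comp]
  exact hX _ hY _

variable (w) in
lemma exists_decomp (X : C) :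
    ∃ (A B : C) (f : A ⟶ X) (g : X ⟶ B), ExactPair f g ∧ w.le A ∧ w.pos B := by
  obtain ⟨A, B, f, g, h, H, hA, B₀, hB₀, ⟨e⟩⟩ := w.decomp X
  exact ⟨A, B, f, g, ⟨h, H⟩, hA, pos_iso e.symm (pos_shift_iff.2 hB₀)⟩

lemma le_of_forall_eq_zero {X : C} (hX : ∀ Y, w.pos Y → ∀ f : X ⟶ Y, f = 0) : w.le X := by
  obtain ⟨A, B, f, g, H, hA, hB⟩ := w.exists_decomp X
  obtain ⟨s, hs⟩ := H.exists_factor_left (𝟙 X) ((Category.id_comp g).trans (hX B hB g))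
  exact w.le_retract hA ⟨s, f, hs.symm⟩

lemma pos_of_forall_eq_zero {Y : C} (hY : ∀ X, w.le X → ∀ f : X ⟶ Y, f = 0) : w.pos Y := by
  obtain ⟨A, B, f, g, H, hA, hB⟩ := w.exists_decomp Y
  obtain ⟨r, hr⟩ := H.exists_factor_right (𝟙 Y) ((Category.comp_id f).trans (hY A hA f))
  exact w.ge_retract hB ⟨g⟦(-1 : ℤ)⟧', r⟦(-1 : ℤ)⟧', by
    rw [← Functor.map_comp, ← hr, CategoryTheory.Functor.map_id]⟩

lemma ge_of_forall_eq_zero {Y : C} (hY : ∀ X, w.le X → ∀ f : X ⟶ Y⟦(1 : ℤ)⟧, f = 0) : w.ge Y :=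
  pos_shift_iff.1 (pos_of_forall_eq_zero hY)

variable (w) in
lemma le_of_isZero {X : C} (hX : IsZero X) : w.le X :=
  le_of_forall_eq_zero fun _ _ f => hX.eq_zero_of_src f

variable (w) in
lemma ge_of_isZero {X : C} (hX : IsZero X) : w.ge X :=
  ge_of_forall_eq_zero fun _ _ f => ((shiftFunctor C (1 : ℤ)).map_isZero hX).eq_zero_of_tgt f

lemma extClosure_subset_le {S : Set C} (hS : S ⊆ w.le) : {X | ExtClosure C S X} ⊆ w.le := by
  intro X hX
  induction hX with
  | of hX => exact hS hX
  | iso e _ hX => exact w.le_iso e hX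
  | ext f g h H _ _ hA hB =>
    exact le_of_forall_eq_zero fun Y hY => ExactPair.eq_zero_of_source ⟨h, H⟩
      (eq_zero_of_le_of_pos hA hY) (eq_zero_of_le_of_pos hB hY)

lemma extClosure_subset_ge {S : Set C} (hS : S ⊆ w.ge) : {X | ExtClosure C S X} ⊆ w.ge := by
  intro X hX
  induction hX with
  | of hX => exact hS hX
  | iso e _ hX => exact w.ge_iso e hX
  | ext f g h H _ _ hA hB =>
    exact ge_of_forall_eq_zero fun Y hY => (ExactPair.shift ⟨h, H⟩).eq_zero_of_target
      (w.orth hY hA) (w.orth hY hB)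

lemma eq_of_subset {w' : WeightStructure C} (hle : w.le ⊆ w'.le) (hge : w.ge ⊆ w'.ge) :
    w = w' := by
  have hle' : w.le = w'.le := hle.antisymm fun X hX =>
    le_of_forall_eq_zero fun Y hY => eq_zero_of_le_of_pos hX (hge hY)
  have hge' : w.ge = w'.ge := hge.antisymm fun Y hY =>
    ge_of_forall_eq_zero fun X hX => w'.orth (hle hX) hY
  cases w
  cases w'
  cases hle'
  cases hge'
  rfl

end WeightStructure

namespace TStructure

variable (t : TStructure C)

/-- The class `C_{t≤-1} = Ω C_{t≤0}`, encoded by suspending. -/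
def neg : Set C := {X | t.le (X⟦(1 : ℤ)⟧)}

variable {t}

lemma neg_iso {X Y : C} (e : X ≅ Y) (hX : t.neg X) : t.neg Y :=
  t.le_iso ((shiftFunctor C (1 : ℤ)).mapIso e) hX

variable (t) in
lemma exists_trunc (X : C) :
    ∃ (A B : C) (f : A ⟶ X) (g : X ⟶ B), ExactPair f g ∧ t.ge A ∧ t.neg B := by
  obtain ⟨A, B, f, g, h, H, hA, B₀, hB₀, ⟨e⟩⟩ := t.trunc X
  exact ⟨A, B, f, g, ⟨h, H⟩, hA, neg_iso e.symm (t.le_iso (shiftNegShift B₀ (1 : ℤ)).symm hB₀)⟩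

end TStructure

section SplitShortExact

variable {𝒞 𝒟 ℰ : Type*} [Category* 𝒞] [Category* 𝒟] [Category* ℰ] [HasZeroMorphisms ℰ]

/-- The adjunctions and the orthogonality condition of a split short exact sequence
`C ⇄ E ⇄ D`: the essential image of `iD` is the right orthogonal of that of `iC`. Exactness of the
four functors and full faithfulness of `iC` and `iD` are left to instances. -/
structure SplitShortExact (iC : 𝒞 ⥤ ℰ) (LC : ℰ ⥤ 𝒞) (LD : ℰ ⥤ 𝒟) (iD : 𝒟 ⥤ ℰ) where
  adjC : iC ⊣ LC
  adjD : LD ⊣ iD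
  essImage_iff (Y : ℰ) : iD.essImage Y ↔ ∀ (c : 𝒞) (f : iC.obj c ⟶ Y), f = 0

variable {iC : 𝒞 ⥤ ℰ} {LC : ℰ ⥤ 𝒞} {LD : ℰ ⥤ 𝒟} {iD : 𝒟 ⥤ ℰ}

lemma forall_shift_eq_zero_iff [HasShift 𝒞 ℤ] [HasShift ℰ ℤ] [iC.CommShift ℤ] (Y : ℰ) :
    (∀ (c : 𝒞) (n : ℤ) (f : (iC.obj c)⟦n⟧ ⟶ Y), f = 0) ↔
      ∀ (c : 𝒞) (f : iC.obj c ⟶ Y), f = 0 := by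
  refine ⟨fun h c f => ?_, fun h c n f => ?_⟩
  · rw [← cancel_epi ((shiftFunctorZero ℰ ℤ).hom.app (iC.obj c)), comp_zero]
    exact h c 0 _
  · rw [← cancel_epi ((iC.commShiftIso n).hom.app c), comp_zero]
    exact h (c⟦n⟧) _

namespace SplitShortExact

variable (S : SplitShortExact iC LC LD iD)

include S

lemma iC_iD_eq_zero {c : 𝒞} {d : 𝒟} (f : iC.obj c ⟶ iD.obj d) : f = 0 :=
  (S.essImage_iff _).1 (iD.obj_mem_essImage d) c f

lemma isZero_LC_iD [HasZeroMorphisms 𝒞] (d : 𝒟) : IsZero (LC.obj (iD.obj d)) := by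
  rw [IsZero.iff_id_eq_zero]
  exact (S.adjC.homEquiv _ _).symm.injective ((S.iC_iD_eq_zero _).trans (S.iC_iD_eq_zero _).symm)

lemma isZero_LD_iC [HasZeroMorphisms 𝒟] (c : 𝒞) : IsZero (LD.obj (iC.obj c)) := by
  rw [IsZero.iff_id_eq_zero]
  exact (S.adjD.homEquiv _ _).injective ((S.iC_iD_eq_zero _).trans (S.iC_iD_eq_zero _).symm)

end SplitShortExact

end SplitShortExact

namespace SplitShortExact

variable {D E} {iC : C ⥤ E} {LC : E ⥤ C} {LD : E ⥤ D} {iD : D ⥤ E}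
  (S : SplitShortExact iC LC LD iD)

section GluingTriangle

variable [LC.CommShift ℤ] [LC.IsTriangulated] [LD.CommShift ℤ] [LD.IsTriangulated]
  [iC.Full] [iC.Faithful] [iD.Full] [iD.Faithful]

include S

lemma exactPair_counit_unit (X : E) : ExactPair (S.adjC.counit.app X) (S.adjD.unit.app X) := by
  obtain ⟨W, g, H⟩ := ExactPair.exists_cone (S.adjC.counit.app X)
  have hLCW : IsZero (LC.obj W) := (H.map LC).isZero_of_isIso
  have hW : iD.essImage W := (S.essImage_iff W).2 fun c f =>
    (S.adjC.homEquiv _ _).injective (hLCW.eq_of_tgt _ _)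
  have : IsIso (S.adjD.unit.app W) := S.adjD.isIso_unit_app_of_iso hW.getIso.symm
  have : IsIso (LD.map g) := H.isIso_map LD (S.isZero_LD_iC _)
  refine H.of_iso (Iso.refl _) (Iso.refl _)
    (asIso (S.adjD.unit.app W) ≪≫ (asIso (iD.map (LD.map g))).symm) (by simp) ?_
  simp [← Category.assoc, IsIso.comp_inv_eq]

lemma exists_fiber_comp {X Z B : E} {P : C} {Q : D} {j : iC.obj P ⟶ X} {q : X ⟶ Z}
    {φ : iD.obj Q ⟶ Z} {p : Z ⟶ B} (Hq : ExactPair j q) (Hp : ExactPair φ p) :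
    ∃ (A : E) (f : A ⟶ X), ExactPair f (q ≫ p) ∧
      Nonempty (P ≅ LC.obj A) ∧ Nonempty (Q ≅ LD.obj A) := by
  have : IsIso (LC.map p) := Hp.isIso_map LC (S.isZero_LC_iD Q)
  have : IsIso (LD.map q) := Hq.isIso_map LD (S.isZero_LD_iC P)
  obtain ⟨A, f, Hf⟩ := ExactPair.exists_fiber (q ≫ p)
  obtain ⟨eC⟩ := (Hq.map LC).nonempty_fiber_iso (Hf.map LC) (Iso.refl _) (asIso (LC.map p))
    (by simp)
  obtain ⟨eD⟩ := (Hp.map LD).nonempty_fiber_iso (Hf.map LD) (asIso (LD.map q)).symm (Iso.refl _)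
    (by simp)
  exact ⟨A, f, Hf, ⟨asIso (S.adjC.unit.app P) ≪≫ eC⟩, ⟨(asIso (S.adjD.counit.app Q)).symm ≪≫ eD⟩⟩

lemma eq_zero_of_LC_LD {X Y : E} (hC : ∀ f : LC.obj X ⟶ LC.obj Y, f = 0)
    (hD : ∀ f : LD.obj X ⟶ LD.obj Y, f = 0)
    (hDC : ∀ f : iD.obj (LD.obj X) ⟶ iC.obj (LC.obj Y), f = 0) (f : X ⟶ Y) : f = 0 := by
  refine (S.exactPair_counit_unit X).eq_zero_of_source
    ((S.exactPair_counit_unit Y).eq_zero_of_target (fun k => ?_) S.iC_iD_eq_zero)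
    ((S.exactPair_counit_unit Y).eq_zero_of_target hDC fun k => ?_) f
  · rw [← iC.map_preimage k, hC (iC.preimage k), iC.map_zero]
  · rw [← iD.map_preimage k, hD (iD.preimage k), iD.map_zero]

end GluingTriangle

section WeightStructure

variable [LC.CommShift ℤ] [LC.IsTriangulated] [LD.CommShift ℤ] [LD.IsTriangulated]
  [iC.Full] [iC.Faithful] [iD.Full] [iD.Faithful]
  {wC : WeightStructure C} {wD : WeightStructure D}
  (hw : ∀ (X : D) (Y : C), wD.le X → wC.pos Y → ∀ f : iD.obj X ⟶ iC.obj Y, f = 0)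

include S hw in
lemma exists_LD_map_eq_counit_comp [iC.CommShift ℤ] {Z : E} {Q : D} (hQ : wD.le Q)
    (hZ : wC.pos (LC.obj Z)) (α : Q ⟶ LD.obj Z) :
    ∃ φ : iD.obj Q ⟶ Z, LD.map φ = S.adjD.counit.app Q ≫ α := by
  have hobstruction (k : iD.obj Q ⟶ (iC.obj (LC.obj Z))⟦(1 : ℤ)⟧) : k = 0 := by
    rw [← cancel_mono ((iC.commShiftIso (1 : ℤ)).inv.app (LC.obj Z)), zero_comp]
    exact hw _ _ hQ (WeightStructure.pos_shift_iff.2 (WeightStructure.ge_of_pos hZ)) _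
  obtain ⟨φ, hφ⟩ := (S.exactPair_counit_unit Z).exists_lift hobstruction (iD.map α)
  refine ⟨φ, ?_⟩
  calc LD.map φ = LD.map (φ ≫ S.adjD.unit.app Z) ≫ S.adjD.counit.app (LD.obj Z) := by simp
    _ = LD.map (iD.map α) ≫ S.adjD.counit.app (LD.obj Z) := by rw [← hφ]
    _ = S.adjD.counit.app Q ≫ α := S.adjD.counit_naturality α

include S hw in
lemma exists_glued_decomp [iC.CommShift ℤ] (X : E) :
    ∃ (A B : E) (f : A ⟶ X) (g : X ⟶ B), ExactPair f g ∧
      (wC.le (LC.obj A) ∧ wD.le (LD.obj A)) ∧ wC.pos (LC.obj B) ∧ wD.pos (LD.obj B) := by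
  obtain ⟨P, P', a, b, Hab, hP, hP'⟩ := wC.exists_decomp (LC.obj X)
  obtain ⟨Z, q, Hq⟩ := ExactPair.exists_cone (iC.map a ≫ S.adjC.counit.app X)
  obtain ⟨eZ⟩ := ExactPair.nonempty_rightAdjoint_cone_iso S.adjC Hq Hab
  have hZ : wC.pos (LC.obj Z) := WeightStructure.pos_iso eZ.symm hP'
  obtain ⟨Q, Q', α, β, Hαβ, hQ, hQ'⟩ := wD.exists_decomp (LD.obj Z)
  obtain ⟨φ, hφ⟩ := S.exists_LD_map_eq_counit_comp hw hQ hZ α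
  obtain ⟨B, p, Hp⟩ := ExactPair.exists_cone φ
  have : IsIso (LC.map p) := Hp.isIso_map LC (S.isZero_LC_iD Q)
  obtain ⟨eB⟩ := (Hp.map LD).nonempty_cone_iso Hαβ (asIso (S.adjD.counit.app Q)) (Iso.refl _)
    (by simp [hφ])
  obtain ⟨A, f, Hf, ⟨eP⟩, ⟨eQ⟩⟩ := S.exists_fiber_comp Hq Hp
  exact ⟨A, B, f, q ≫ p, Hf, ⟨wC.le_iso eP hP, wD.le_iso eQ hQ⟩,
    WeightStructure.pos_iso (asIso (LC.map p)) hZ, WeightStructure.pos_iso eB.symm hQ'⟩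

/-- The weight structure on `E` whose classes are detected by `LC` and `LD`. -/
def glueWeightStructure [iC.CommShift ℤ] : WeightStructure E where
  le := LC.obj ⁻¹' wC.le ∩ LD.obj ⁻¹' wD.le
  ge := LC.obj ⁻¹' wC.ge ∩ LD.obj ⁻¹' wD.ge
  le_iso _ _ e h := ⟨wC.le_iso (LC.mapIso e) h.1, wD.le_iso (LD.mapIso e) h.2⟩
  ge_iso _ _ e h := ⟨wC.ge_iso (LC.mapIso e) h.1, wD.ge_iso (LD.mapIso e) h.2⟩
  le_retract _ _ h := fun ⟨i, r, hir⟩ =>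
    ⟨wC.le_retract h.1 ⟨LC.map i, LC.map r, by simp [← Functor.map_comp, hir]⟩,
      wD.le_retract h.2 ⟨LD.map i, LD.map r, by simp [← Functor.map_comp, hir]⟩⟩
  ge_retract _ _ h := fun ⟨i, r, hir⟩ =>
    ⟨wC.ge_retract h.1 ⟨LC.map i, LC.map r, by simp [← Functor.map_comp, hir]⟩,
      wD.ge_retract h.2 ⟨LD.map i, LD.map r, by simp [← Functor.map_comp, hir]⟩⟩
  le_shift X h := ⟨wC.le_iso ((LC.commShiftIso (-1 : ℤ)).app X).symm (wC.le_shift h.1),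
    wD.le_iso ((LD.commShiftIso (-1 : ℤ)).app X).symm (wD.le_shift h.2)⟩
  ge_shift X h := ⟨wC.ge_iso ((LC.commShiftIso (1 : ℤ)).app X).symm (wC.ge_shift h.1),
    wD.ge_iso ((LD.commShiftIso (1 : ℤ)).app X).symm (wD.ge_shift h.2)⟩
  orth X Y hX hY := by
    have hC : wC.pos (LC.obj (Y⟦(1 : ℤ)⟧)) := WeightStructure.pos_iso
      ((LC.commShiftIso (1 : ℤ)).app Y).symm (WeightStructure.pos_shift_iff.2 hY.1)
    have hD : wD.pos (LD.obj (Y⟦(1 : ℤ)⟧)) := WeightStructure.pos_iso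
      ((LD.commShiftIso (1 : ℤ)).app Y).symm (WeightStructure.pos_shift_iff.2 hY.2)
    exact S.eq_zero_of_LC_LD (WeightStructure.eq_zero_of_le_of_pos hX.1 hC)
      (WeightStructure.eq_zero_of_le_of_pos hX.2 hD) (hw _ _ hX.2 hC)
  decomp X := by
    obtain ⟨A, B, f, g, ⟨h, H⟩, hA, hBC, hBD⟩ := S.exists_glued_decomp hw X
    exact ⟨A, B, f, g, h, H, hA, B⟦(-1 : ℤ)⟧,
      ⟨wC.ge_iso ((LC.commShiftIso (-1 : ℤ)).app B).symm hBC,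
        wD.ge_iso ((LD.commShiftIso (-1 : ℤ)).app B).symm hBD⟩,
      ⟨(shiftNegShift B (1 : ℤ)).symm⟩⟩

variable [iC.CommShift ℤ]

lemma weightExact_iC : WeightExact C iC wC
    ((S.glueWeightStructure hw).le, (S.glueWeightStructure hw).ge) :=
  ⟨fun X hX => ⟨wC.le_iso (asIso (S.adjC.unit.app X)) hX, wD.le_of_isZero (S.isZero_LD_iC X)⟩,
    fun X hX => ⟨wC.ge_iso (asIso (S.adjC.unit.app X)) hX, wD.ge_of_isZero (S.isZero_LD_iC X)⟩⟩

lemma weightExact_iD : WeightExact D iD wD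
    ((S.glueWeightStructure hw).le, (S.glueWeightStructure hw).ge) :=
  ⟨fun X hX =>
      ⟨wC.le_of_isZero (S.isZero_LC_iD X), wD.le_iso (asIso (S.adjD.counit.app X)).symm hX⟩,
    fun X hX =>
      ⟨wC.ge_of_isZero (S.isZero_LC_iD X), wD.ge_iso (asIso (S.adjD.counit.app X)).symm hX⟩⟩

lemma weightExact_LC : WeightExact E LC (S.glueWeightStructure hw) (wC.le, wC.ge) :=
  ⟨fun _ hX => hX.1, fun _ hX => hX.1⟩

lemma weightExact_LD : WeightExact E LD (S.glueWeightStructure hw) (wD.le, wD.ge) :=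
  ⟨fun _ hX => hX.2, fun _ hX => hX.2⟩

include S in
omit [iC.CommShift ℤ] in
lemma extClosure_of_LC_LD {U : Set C} {V : Set D} {X : E} (hC : LC.obj X ∈ U) (hD : LD.obj X ∈ V) :
    ExtClosure E (iC.obj '' U ∪ iD.obj '' V) X := by
  obtain ⟨h, H⟩ := S.exactPair_counit_unit X
  exact .ext _ _ h H (.of (.inl ⟨_, hC, rfl⟩)) (.of (.inr ⟨_, hD, rfl⟩))

lemma glueWeightStructure_le :
    (S.glueWeightStructure hw).le = {X | ExtClosure E (iC.obj '' wC.le ∪ iD.obj '' wD.le) X} :=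
  Set.Subset.antisymm (fun _ hX => S.extClosure_of_LC_LD hX.1 hX.2) <|
    WeightStructure.extClosure_subset_le <| Set.union_subset
      (Set.image_subset_iff.2 (S.weightExact_iC hw).1)
      (Set.image_subset_iff.2 (S.weightExact_iD hw).1)

lemma glueWeightStructure_ge :
    (S.glueWeightStructure hw).ge = {X | ExtClosure E (iC.obj '' wC.ge ∪ iD.obj '' wD.ge) X} :=
  Set.Subset.antisymm (fun _ hX => S.extClosure_of_LC_LD hX.1 hX.2) <|
    WeightStructure.extClosure_subset_ge <| Set.union_subset
      (Set.image_subset_iff.2 (S.weightExact_iC hw).2)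
      (Set.image_subset_iff.2 (S.weightExact_iD hw).2)

lemma eq_glueWeightStructure {w : WeightStructure E} (hC : WeightExact C iC wC (w.le, w.ge))
    (hD : WeightExact D iD wD (w.le, w.ge)) : w = S.glueWeightStructure hw := by
  refine (WeightStructure.eq_of_subset ?_ ?_).symm
  · rw [glueWeightStructure_le]
    exact WeightStructure.extClosure_subset_le <|
      Set.union_subset (Set.image_subset_iff.2 hC.1) (Set.image_subset_iff.2 hD.1)
  · rw [glueWeightStructure_ge]
    exact WeightStructure.extClosure_subset_ge <|
      Set.union_subset (Set.image_subset_iff.2 hC.2) (Set.image_subset_iff.2 hD.2)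

end WeightStructure

section TStructure

variable [LC.CommShift ℤ] [LC.IsTriangulated] [LD.CommShift ℤ] [LD.IsTriangulated]
  [iC.Full] [iC.Faithful] [iD.Full] [iD.Faithful]
  {RD : E ⥤ D} (adjR : iD ⊣ RD)

include S adjR in
lemma eq_zero_of_LC_RD {X Y : E} (hC : ∀ f : LC.obj X ⟶ LC.obj Y, f = 0)
    (hD : ∀ f : LD.obj X ⟶ RD.obj Y, f = 0) (f : X ⟶ Y) : f = 0 :=
  (S.exactPair_counit_unit X).eq_zero_of_source
    (fun _ => (S.adjC.homEquiv _ _).injective ((hC _).trans (hC _).symm))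
    (fun _ => (adjR.homEquiv _ _).injective ((hD _).trans (hD _).symm)) f

variable [RD.CommShift ℤ] (tC : TStructure C) (tD : TStructure D)

include S adjR in
lemma exists_glued_trunc [RD.IsTriangulated] (X : E) :
    ∃ (A B : E) (f : A ⟶ X) (g : X ⟶ B), ExactPair f g ∧
      (tC.ge (LC.obj A) ∧ tD.ge (LD.obj A)) ∧ tC.neg (LC.obj B) ∧ tD.neg (RD.obj B) := by
  obtain ⟨P, P', a, b, Hab, hP, hP'⟩ := tC.exists_trunc (LC.obj X)
  obtain ⟨Z, q, Hq⟩ := ExactPair.exists_cone (iC.map a ≫ S.adjC.counit.app X)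
  obtain ⟨eZ⟩ := ExactPair.nonempty_rightAdjoint_cone_iso S.adjC Hq Hab
  obtain ⟨Q, Q', α, β, Hαβ, hQ, hQ'⟩ := tD.exists_trunc (RD.obj Z)
  obtain ⟨B, p, Hp⟩ := ExactPair.exists_cone (iD.map α ≫ adjR.counit.app Z)
  have : IsIso (LC.map p) := Hp.isIso_map LC (S.isZero_LC_iD Q)
  obtain ⟨eB⟩ := ExactPair.nonempty_rightAdjoint_cone_iso adjR Hp Hαβ
  obtain ⟨A, f, Hf, ⟨eP⟩, ⟨eQ⟩⟩ := S.exists_fiber_comp Hq Hp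
  exact ⟨A, B, f, q ≫ p, Hf, ⟨tC.ge_iso eP hP, tD.ge_iso eQ hQ⟩,
    TStructure.neg_iso (eZ.symm ≪≫ asIso (LC.map p)) hP', TStructure.neg_iso eB.symm hQ'⟩

/-- The t-structure on `E` glued along the recollement given by a right adjoint `RD` of `iD`: the
class `E_{t≥0}` is detected by `LC` and `LD`, the class `E_{t≤0}` by `LC` and `RD`. -/
def glueTStructure [RD.IsTriangulated] : TStructure E where
  le := LC.obj ⁻¹' tC.le ∩ RD.obj ⁻¹' tD.le
  ge := LC.obj ⁻¹' tC.ge ∩ LD.obj ⁻¹' tD.ge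
  le_iso _ _ e h := ⟨tC.le_iso (LC.mapIso e) h.1, tD.le_iso (RD.mapIso e) h.2⟩
  ge_iso _ _ e h := ⟨tC.ge_iso (LC.mapIso e) h.1, tD.ge_iso (LD.mapIso e) h.2⟩
  le_shift X h := ⟨tC.le_iso ((LC.commShiftIso (-1 : ℤ)).app X).symm (tC.le_shift h.1),
    tD.le_iso ((RD.commShiftIso (-1 : ℤ)).app X).symm (tD.le_shift h.2)⟩
  ge_shift X h := ⟨tC.ge_iso ((LC.commShiftIso (1 : ℤ)).app X).symm (tC.ge_shift h.1),
    tD.ge_iso ((LD.commShiftIso (1 : ℤ)).app X).symm (tD.ge_shift h.2)⟩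
  orth X Y hX hY := S.eq_zero_of_LC_RD adjR
    (fun f => by
      rw [← cancel_epi ((LC.commShiftIso (1 : ℤ)).inv.app Y), comp_zero]
      exact tC.orth hX.1 hY.1 _)
    (fun f => by
      rw [← cancel_epi ((LD.commShiftIso (1 : ℤ)).inv.app Y), comp_zero]
      exact tD.orth hX.2 hY.2 _)
  trunc X := by
    obtain ⟨A, B, f, g, ⟨h, H⟩, hA, hBC, hBD⟩ := S.exists_glued_trunc adjR tC tD X
    exact ⟨A, B, f, g, h, H, hA, B⟦(1 : ℤ)⟧,
      ⟨tC.le_iso ((LC.commShiftIso (1 : ℤ)).app B).symm hBC,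
        tD.le_iso ((RD.commShiftIso (1 : ℤ)).app B).symm hBD⟩,
      ⟨(shiftShiftNeg B (1 : ℤ)).symm⟩⟩

variable {tC tD}

lemma glueTStructure_ge_eq [RD.IsTriangulated] [iC.CommShift ℤ]
    {wC : WeightStructure C} {wD : WeightStructure D}
    (hw : ∀ (X : D) (Y : C), wD.le X → wC.pos Y → ∀ f : iD.obj X ⟶ iC.obj Y, f = 0)
    (hC : tC.ge = wC.ge) (hD : tD.ge = wD.ge) :
    (S.glueTStructure adjR tC tD).ge = (S.glueWeightStructure hw).ge :=
  congrArg₂ (fun U V => LC.obj ⁻¹' U ∩ LD.obj ⁻¹' V) hC hD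

end TStructure

end SplitShortExact

/-- Gluing of weight structures and adjacent t-structures along a split short exact
sequence `C ⇄ E ⇄ D` of stable categories.  Given weight structures on `C` and `D`
with `π₀Map_E(i_D X, i_C Y) = 0` for `X ∈ D_{w≤0}` and `Y ∈ Σ C_{w≥0}`, there is a
unique weight structure on `E` making the four functors weight-exact; its
non-negative (resp. non-positive) part is the extension-closure of
`i_C(C_{w≥0}) ∪ i_D(D_{w≥0})` (resp. `i_C(C_{w≤0}) ∪ i_D(D_{w≤0})`).  Moreover if
`i_D` has a right adjoint and the weight structures on `C` and `D` admit adjacent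
t-structures, then so does the glued weight structure on `E`. -/
theorem statement13
    (iC : C ⥤ E) (LC : E ⥤ C) (LD : E ⥤ D) (iD : D ⥤ E)
    [iC.CommShift ℤ] [iC.IsTriangulated] [LC.CommShift ℤ] [LC.IsTriangulated]
    [LD.CommShift ℤ] [LD.IsTriangulated] [iD.CommShift ℤ] [iD.IsTriangulated]
    [iC.Full] [iC.Faithful] [iD.Full] [iD.Faithful]
    (adjC : iC ⊣ LC) (adjD : LD ⊣ iD)
    (horth : ∀ Y : E, iD.essImage Y ↔
      (∀ (c : C) (n : ℤ) (f : (iC.obj c)⟦n⟧ ⟶ Y), f = 0))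
    (wC : WeightStructure C) (wD : WeightStructure D)
    (hw : ∀ (X : D) (Y : C), wD.le X → wC.ge Y →
      ∀ f : iD.obj X ⟶ (iC.obj Y)⟦(1 : ℤ)⟧, f = 0) :
    ∃ wE : WeightStructure E,
      (WeightExact C iC wC (wE.le, wE.ge) ∧ WeightExact D iD wD (wE.le, wE.ge) ∧
        WeightExact E LC wE (wC.le, wC.ge) ∧ WeightExact E LD wE (wD.le, wD.ge)) ∧
      wE.ge = {X : E | ExtClosure E (iC.obj '' wC.ge ∪ iD.obj '' wD.ge) X} ∧
      wE.le = {X : E | ExtClosure E (iC.obj '' wC.le ∪ iD.obj '' wD.le) X} ∧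
      (∀ wE' : WeightStructure E,
        (WeightExact C iC wC (wE'.le, wE'.ge) ∧ WeightExact D iD wD (wE'.le, wE'.ge) ∧
          WeightExact E LC wE' (wC.le, wC.ge) ∧ WeightExact E LD wE' (wD.le, wD.ge)) →
        wE' = wE) ∧
      (∀ (RD : E ⥤ D), (iD ⊣ RD) →
        ∀ (tC : TStructure C) (tD : TStructure D),
          tC.ge = wC.ge → tD.ge = wD.ge →
          ∃ tE : TStructure E, tE.ge = wE.ge) := by
  let S : SplitShortExact iC LC LD iD :=
    ⟨adjC, adjD, fun Y => (horth Y).trans (forall_shift_eq_zero_iff Y)⟩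
  have hw' (X : D) (Y : C) (hX : wD.le X) (hY : wC.pos Y) (f : iD.obj X ⟶ iC.obj Y) : f = 0 :=
    WeightStructure.eq_zero_of_pos_of_forall_ge (hw X · hX) hY f
  refine ⟨S.glueWeightStructure hw',
    ⟨S.weightExact_iC hw', S.weightExact_iD hw', S.weightExact_LC hw', S.weightExact_LD hw'⟩,
    S.glueWeightStructure_ge hw', S.glueWeightStructure_le hw',
    fun _ h => S.eq_glueWeightStructure hw' h.1 h.2.1, fun RD adjR tC tD hC hD => ?_⟩
  let := adjR.rightAdjointCommShift ℤ
  have := adjR.commShift_of_leftAdjoint ℤ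
  have := adjR.isTriangulated_rightAdjoint
  exact ⟨S.glueTStructure adjR tC tD, S.glueTStructure_ge_eq adjR hw' hC hD⟩

end
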